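/- If χ = (P,Q,R) is a vector field on 𝕋² with deg P, deg Q, deg R ≤ 2, then there exist α ∈ ℝ and f ∈ ℝ[x,y,z] with deg f ≤ 1 such that P = (α/4)xz + f·y, Q = (α/4)yz − f·x, and R = (α/2)(−a²(x²+y²)+z²+a⁴−1). -/

import Mathlib

open MvPolynomial

/-- Derivative of `g` along the polynomial vector field `(P, Q, R)` in `ℝ[x,y,z]`. -/
noncomputable def vf (P Q R g : MvPolynomial (Fin 3) ℝ) : MvPolynomial (Fin 3) ℝ :=
  P * pderiv 0 g + Q * pderiv 1 g + R * pderiv 2 g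

/-- The defining polynomial `F = (x²+y²-a²)² + z² - 1` of the torus `𝕋²`. -/
noncomputable def torusF (a : ℝ) : MvPolynomial (Fin 3) ℝ :=
  (X 0 ^ 2 + X 1 ^ 2 - C (a ^ 2)) ^ 2 + X 2 ^ 2 - 1

/-- `(P, Q, R)` is a polynomial vector field on the torus `𝕋²`. -/
def IsVFOnTorus (a : ℝ) (P Q R : MvPolynomial (Fin 3) ℝ) : Prop :=
  ∃ K : MvPolynomial (Fin 3) ℝ, vf P Q R (torusF a) = K * torusF a

/-!
Write `ρ = x² + y² - c` with `c = a²`, so that `F = ρ² + z² - 1`, and `S = xP + yQ`. Tangency with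
cofactor `K` reads `4ρS + 2zR = K(ρ² + z² - 1)`, where `deg K ≤ 1`. On the plane `z = 0` the
polynomial `ρ` divides `K`, whose degree is smaller, so `K = αz`. Cancelling `z`, `ρ` divides
`2R - α(z² - 1)`, which has degree at most `2`, so the quotient is a constant `β`; evaluating on the
`z`-axis, where `S = 0`, gives `β = -αc`. This determines `R` and `S = (α/4)(x² + y²)z`, and `P`,
`Q` are then known up to a syzygy `(fy, -fx)` of `(x, y)`.
-/

section TotalDegree

variable {σ τ R : Type*} [CommSemiring R]

theorem totalDegree_aeval_le {g : σ → MvPolynomial τ R} {d : ℕ}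
    (hg : ∀ i, (g i).totalDegree ≤ d) (p : MvPolynomial σ R) :
    (aeval g p).totalDegree ≤ d * p.totalDegree := by
  rw [aeval_def, eval₂_eq]
  refine totalDegree_finsetSum_le fun m hm => ?_
  calc (algebraMap R (MvPolynomial τ R) (coeff m p) * ∏ i ∈ m.support, g i ^ m i).totalDegree
      ≤ 0 + ∑ i ∈ m.support, (g i ^ m i).totalDegree :=
        (totalDegree_mul _ _).trans
          (add_le_add (totalDegree_C _).le (totalDegree_finsetProd _ _))
    _ ≤ ∑ i ∈ m.support, m i * d := by
        rw [zero_add]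
        gcongr with i
        exact (totalDegree_pow _ _).trans (Nat.mul_le_mul_left _ (hg i))
    _ = d * m.sum fun _ e => e := by rw [← Finset.sum_mul, mul_comm, Finsupp.sum]
    _ ≤ d * p.totalDegree := Nat.mul_le_mul_left _ (le_totalDegree hm)

theorem totalDegree_pderiv_le (i : σ) (p : MvPolynomial σ R) :
    (pderiv i p).totalDegree ≤ p.totalDegree - 1 := by
  refine Finset.sup_le fun m hm => ?_
  have hmem : m + Finsupp.single i 1 ∈ p.support := by
    rw [mem_support_iff, coeff_pderiv] at hm
    exact mem_support_iff.2 (left_ne_zero_of_mul hm)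
  have hle := le_totalDegree hmem
  rw [Finsupp.sum_add_index' (fun _ => rfl) (fun _ _ _ => rfl), Finsupp.sum_single_index rfl] at hle
  omega

variable [NoZeroDivisors R]

theorem totalDegree_cofactor_le [Fintype σ] {V : σ → MvPolynomial σ R} {F K : MvPolynomial σ R}
    {d : ℕ} (hV : ∀ i, (V i).totalDegree ≤ d) (hF : F.totalDegree ≠ 0)
    (h : ∑ i, V i * pderiv i F = K * F) : K.totalDegree ≤ d - 1 := by
  rcases eq_or_ne K 0 with rfl | hK
  · simp
  have hF0 : F ≠ 0 := by rintro rfl; exact hF totalDegree_zero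
  have hsum : (∑ i, V i * pderiv i F).totalDegree ≤ d + (F.totalDegree - 1) :=
    totalDegree_finsetSum_le fun i _ =>
      (totalDegree_mul _ _).trans (add_le_add (hV i) (totalDegree_pderiv_le i F))
  rw [h, totalDegree_mul_of_isDomain hK hF0] at hsum
  omega

theorem eq_zero_of_dvd_of_totalDegree_lt {p q : MvPolynomial σ R} (hpq : p ∣ q)
    (hdeg : q.totalDegree < p.totalDegree) : q = 0 := by
  by_contra hq
  exact hdeg.not_ge (totalDegree_le_of_dvd_of_isDomain hpq hq)

theorem exists_eq_C_mul_of_dvd_of_totalDegree_le {p q : MvPolynomial σ R} (hpq : p ∣ q)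
    (hdeg : q.totalDegree ≤ p.totalDegree) : ∃ b : R, q = C b * p := by
  obtain ⟨u, rfl⟩ := hpq
  rcases eq_or_ne (p * u) 0 with h0 | h0
  · exact ⟨0, by simp [h0]⟩
  rw [totalDegree_mul_of_isDomain (left_ne_zero_of_mul h0) (right_ne_zero_of_mul h0)] at hdeg
  have hu : u = C (coeff 0 u) := totalDegree_eq_zero_iff_eq_C.1 (by omega)
  exact ⟨coeff 0 u, by rw [← hu, mul_comm]⟩

end TotalDegree

section SetZero

variable {σ R : Type*} [DecidableEq σ]

section CommSemiring

variable [CommSemiring R]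

/-- Restriction of polynomials to the coordinate hyperplane `xᵢ = 0`, as an endomorphism of the
polynomial ring: it substitutes `0` for the variable `xᵢ` and fixes the other variables. -/
noncomputable def setZero (i : σ) : MvPolynomial σ R →ₐ[R] MvPolynomial σ R :=
  aeval (Function.update X i 0)

@[simp]
theorem setZero_X_self (i : σ) : setZero i (X i : MvPolynomial σ R) = 0 := by
  simp [setZero]

@[simp]
theorem setZero_X_of_ne {i j : σ} (h : j ≠ i) : setZero i (X j : MvPolynomial σ R) = X j := by
  simp [setZero, h]

theorem totalDegree_setZero_le (i : σ) (p : MvPolynomial σ R) :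
    (setZero i p).totalDegree ≤ p.totalDegree := by
  refine (totalDegree_aeval_le (fun j => ?_) p).trans_eq (one_mul _)
  rcases eq_or_ne j i with rfl | hj
  · simp
  · simpa [hj, X] using totalDegree_monomial_le (Finsupp.single j 1) (1 : R)

end CommSemiring

variable [CommRing R]

theorem X_dvd_sub_setZero (i : σ) (p : MvPolynomial σ R) : X i ∣ p - setZero i p := by
  let π := Ideal.Quotient.mkₐ R (Ideal.span {(X i : MvPolynomial σ R)})
  have hπ : π.comp (setZero i) = π := by
    ext j
    rcases eq_or_ne j i with rfl | hj
    · simp [π]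
    · simp [hj]
  rw [← Ideal.mem_span_singleton, ← Ideal.Quotient.eq]
  exact (DFunLike.congr_fun hπ p).symm

theorem X_dvd_of_setZero_eq_zero {i : σ} {p : MvPolynomial σ R} (h : setZero i p = 0) :
    X i ∣ p := by
  simpa [h] using X_dvd_sub_setZero i p

end SetZero

theorem exists_eq_mul_of_mul_add_mul_eq_zero {A : Type*} [CommRing A] [IsDomain A]
    {p q u v : A} (hq : Prime q) (hqp : ¬ q ∣ p) (h : p * u + q * v = 0) :
    ∃ f, u = f * q ∧ v = -(f * p) := by
  have hdvd : q ∣ p * u := ⟨-v, by linear_combination h⟩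
  obtain ⟨f, rfl⟩ := (hq.dvd_or_dvd hdvd).resolve_left hqp
  exact ⟨f, mul_comm q f, mul_left_cancel₀ hq.ne_zero (by linear_combination h)⟩

section Cofactor

variable {σ R : Type*} [DecidableEq σ] [CommRing R] [IsDomain R]
  {i : σ} {ρ A B K : MvPolynomial σ R}

theorem exists_cofactor_eq_C_mul_X (hρ : 2 ≤ ρ.totalDegree) (hρi : setZero i ρ = ρ)
    (hK : K.totalDegree ≤ 1) (h : ρ * A + X i * B = K * (ρ ^ 2 + X i ^ 2 - 1)) :
    ∃ α : R, K = C α * X i := by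
  have hrestrict : ρ * setZero i A = setZero i K * (ρ ^ 2 - 1) := by
    simpa [hρi] using congrArg (setZero i) h
  have hdvd : ρ ∣ setZero i K :=
    ⟨setZero i K * ρ - setZero i A, by linear_combination hrestrict⟩
  have hK0 : setZero i K = 0 := eq_zero_of_dvd_of_totalDegree_lt hdvd <|
    (totalDegree_setZero_le i K).trans_lt (by omega)
  exact exists_eq_C_mul_of_dvd_of_totalDegree_le (X_dvd_of_setZero_eq_zero hK0)
    (by rwa [totalDegree_X])

theorem exists_C_of_mul_add_X_mul_eq_cofactor_mul (hρ : 2 ≤ ρ.totalDegree)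
    (hρi : setZero i ρ = ρ) (hB : B.totalDegree ≤ 2) (hK : K.totalDegree ≤ 1)
    (h : ρ * A + X i * B = K * (ρ ^ 2 + X i ^ 2 - 1)) :
    ∃ α β : R, A = X i * (C α * ρ - C β) ∧ B = C α * (X i ^ 2 - 1) + C β * ρ := by
  obtain ⟨α, rfl⟩ := exists_cofactor_eq_C_mul_X hρ hρi hK h
  have hρ0 : ρ ≠ 0 := by rintro rfl; simp at hρ
  obtain ⟨A', rfl⟩ : X i ∣ A := by
    refine X_dvd_of_setZero_eq_zero ((mul_eq_zero.1 ?_).resolve_left hρ0)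
    simpa [hρi] using congrArg (setZero i) h
  have hcancel : ρ * A' + B = C α * (ρ ^ 2 + X i ^ 2 - 1) :=
    mul_left_cancel₀ (X_ne_zero i) (by linear_combination h)
  have hquad : (C α * (X i ^ 2 - 1)).totalDegree ≤ 2 := by
    refine (totalDegree_mul _ _).trans ?_
    rw [totalDegree_C, zero_add, ← C_1]
    exact (totalDegree_sub_C_le _ _).trans (totalDegree_X_pow i 2).le
  have hdvd : ρ ∣ B - C α * (X i ^ 2 - 1) := ⟨C α * ρ - A', by linear_combination hcancel⟩
  obtain ⟨β, hβ⟩ := exists_eq_C_mul_of_dvd_of_totalDegree_le hdvd <|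
    ((totalDegree_sub _ _).trans (max_le hB hquad)).trans hρ
  have hA' : A' = C α * ρ - C β :=
    mul_left_cancel₀ hρ0 (by linear_combination hcancel - hβ)
  exact ⟨α, β, by rw [hA'], by linear_combination hβ⟩

end Cofactor

section Torus

variable {R : Type*} [CommRing R]

/-- The polynomial `x² + y² - c` of the circular cylinder around the `z`-axis with squared
radius `c`. -/
noncomputable def cylinderPoly (c : R) : MvPolynomial (Fin 3) R :=
  X 0 ^ 2 + X 1 ^ 2 - C c

/-- The polynomial `(x² + y² - c)² + z² - 1` of the torus over a commutative ring. It is `torusF a`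
for `R = ℝ` and `c = a²`, but `c` need not be a square. -/
noncomputable def torusPoly (c : R) : MvPolynomial (Fin 3) R :=
  cylinderPoly c ^ 2 + X 2 ^ 2 - 1

theorem setZero_cylinderPoly (c : R) : setZero 2 (cylinderPoly c) = cylinderPoly c := by
  simp [cylinderPoly, ← algebraMap_eq]

theorem two_le_totalDegree_cylinderPoly [Nontrivial R] (c : R) :
    2 ≤ (cylinderPoly c).totalDegree := by
  have hmem : Finsupp.single 0 2 ∈ (cylinderPoly c).support := by
    simp [cylinderPoly, coeff_X_pow, coeff_C, Finsupp.single_left_inj, eq_comm]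
  simpa using le_totalDegree hmem

theorem totalDegree_torusPoly_ne_zero [Nontrivial R] (c : R) : (torusPoly c).totalDegree ≠ 0 := by
  intro h
  have hconst := totalDegree_eq_zero_iff_eq_C.1 h
  have hvals : eval ![0, 0, 0] (torusPoly c) = eval ![0, 0, 1] (torusPoly c) := by
    rw [hconst, eval_C, eval_C]
  simp [torusPoly, cylinderPoly] at hvals

theorem vectorField_torusPoly (c : R) (P Q T : MvPolynomial (Fin 3) R) :
    P * pderiv 0 (torusPoly c) + Q * pderiv 1 (torusPoly c) + T * pderiv 2 (torusPoly c) =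
      cylinderPoly c * (4 * (X 0 * P + X 1 * Q)) + X 2 * (2 * T) := by
  simp only [torusPoly, cylinderPoly, map_add, map_sub, pderiv_pow, pderiv_C, pderiv_one, pderiv_X,
    Pi.single_apply, Fin.reduceEq, if_true, if_false]
  push_cast
  ring

theorem totalDegree_torusPoly_cofactor_le [IsDomain R] {c : R} {P Q T K : MvPolynomial (Fin 3) R}
    {d : ℕ} (hP : P.totalDegree ≤ d) (hQ : Q.totalDegree ≤ d) (hT : T.totalDegree ≤ d)
    (h : P * pderiv 0 (torusPoly c) + Q * pderiv 1 (torusPoly c) + T * pderiv 2 (torusPoly c) =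
      K * torusPoly c) : K.totalDegree ≤ d - 1 := by
  refine totalDegree_cofactor_le (V := ![P, Q, T]) ?_ (totalDegree_torusPoly_ne_zero c)
    (by simpa [Fin.sum_univ_three] using h)
  simp [Fin.forall_fin_succ, hP, hQ, hT]

theorem exists_tangential_of_radial_eq [IsDomain R] {γ : R} {P Q : MvPolynomial (Fin 3) R}
    (hP : P.totalDegree ≤ 2) (h : X 0 * P + X 1 * Q = C γ * (X 0 ^ 2 + X 1 ^ 2) * X 2) :
    ∃ f : MvPolynomial (Fin 3) R, f.totalDegree ≤ 1 ∧
      P = C γ * X 0 * X 2 + f * X 1 ∧ Q = C γ * X 1 * X 2 - f * X 0 := by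
  obtain ⟨f, hf₁, hf₀⟩ := exists_eq_mul_of_mul_add_mul_eq_zero (p := X 0) (q := X 1)
    (u := P - C γ * X 0 * X 2) (v := Q - C γ * X 1 * X 2) X_prime (by simp [X_dvd_X])
    (by linear_combination h)
  refine ⟨f, ?_, by linear_combination hf₁, by linear_combination hf₀⟩
  rcases eq_or_ne f 0 with rfl | hf
  · simp
  have hdeg : (f * X 1).totalDegree ≤ 2 := by
    rw [← hf₁]
    refine (totalDegree_sub _ _).trans (max_le hP ?_)
    grw [totalDegree_mul, totalDegree_mul, totalDegree_C, totalDegree_X, totalDegree_X]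
  rw [totalDegree_mul_of_isDomain hf (X_ne_zero 1), totalDegree_X] at hdeg
  omega

end Torus

section Quadratic

variable {k : Type*} [Field k] [NeZero (2 : k)] {c : k} {P Q R K : MvPolynomial (Fin 3) k}

theorem exists_radial_eq_and_vertical_eq (hP : P.totalDegree ≤ 2) (hQ : Q.totalDegree ≤ 2)
    (hR : R.totalDegree ≤ 2)
    (h : P * pderiv 0 (torusPoly c) + Q * pderiv 1 (torusPoly c) + R * pderiv 2 (torusPoly c) =
      K * torusPoly c) :
    ∃ γ : k, X 0 * P + X 1 * Q = C γ * (X 0 ^ 2 + X 1 ^ 2) * X 2 ∧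
      R = C (2 * γ) * (-C c * (X 0 ^ 2 + X 1 ^ 2) + X 2 ^ 2 + C (c ^ 2 - 1)) := by
  have hK : K.totalDegree ≤ 1 := totalDegree_torusPoly_cofactor_le hP hQ hR h
  rw [vectorField_torusPoly, torusPoly] at h
  have hR2 : (2 * R).totalDegree ≤ 2 := by
    rw [two_mul]
    exact (totalDegree_add _ _).trans (max_le hR hR)
  obtain ⟨α, β, hS, hR'⟩ := exists_C_of_mul_add_X_mul_eq_cofactor_mul
    (two_le_totalDegree_cylinderPoly c) (setZero_cylinderPoly c) hR2 hK h
  have two_ne : (2 : k) ≠ 0 := two_ne_zero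
  obtain ⟨γ, rfl⟩ : ∃ γ, α = 2 * (2 * γ) := ⟨α / 2 / 2, by field_simp⟩
  obtain rfl : β = -(2 * (2 * γ) * c) := by
    have haxis : 0 = -(2 * (2 * γ) * c) - β := by
      simpa [cylinderPoly] using congrArg (eval ![0, 0, 1]) hS
    linear_combination haxis
  have two_ne_poly : (2 : MvPolynomial (Fin 3) k) ≠ 0 := by
    rw [← map_ofNat C 2]
    exact C_ne_zero.2 two_ne
  simp only [cylinderPoly, C_neg, C_mul, map_ofNat] at hS hR'
  refine ⟨γ, ?_, ?_⟩
  · apply mul_left_cancel₀ two_ne_poly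
    apply mul_left_cancel₀ two_ne_poly
    linear_combination hS
  · apply mul_left_cancel₀ two_ne_poly
    simp only [C_mul, C_sub, C_pow, C_1, map_ofNat]
    linear_combination hR'

theorem stmt_10_general (hP : P.totalDegree ≤ 2) (hQ : Q.totalDegree ≤ 2)
    (hR : R.totalDegree ≤ 2)
    (h : P * pderiv 0 (torusPoly c) + Q * pderiv 1 (torusPoly c) + R * pderiv 2 (torusPoly c) =
      K * torusPoly c) :
    ∃ (α : k) (f : MvPolynomial (Fin 3) k), f.totalDegree ≤ 1 ∧
      P = C (α / 4) * X 0 * X 2 + f * X 1 ∧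
      Q = C (α / 4) * X 1 * X 2 - f * X 0 ∧
      R = C (α / 2) * (-C c * (X 0 ^ 2 + X 1 ^ 2) + X 2 ^ 2 + C (c ^ 2 - 1)) := by
  obtain ⟨γ, hradial, hvertical⟩ := exists_radial_eq_and_vertical_eq hP hQ hR h
  obtain ⟨f, hf, hPf, hQf⟩ := exists_tangential_of_radial_eq hP hradial
  have two_ne : (2 : k) ≠ 0 := two_ne_zero
  have h4 : 2 * (2 * γ) / 4 = γ := by
    rw [show (4 : k) = 2 * 2 by norm_num, mul_div_mul_left _ _ two_ne,
      mul_div_cancel_left₀ _ two_ne]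
  exact ⟨2 * (2 * γ), f, hf, by rwa [h4], by rwa [h4], by rwa [mul_div_cancel_left₀ _ two_ne]⟩

end Quadratic

theorem stmt_10 (a : ℝ) (ha : 1 < a) (P Q R : MvPolynomial (Fin 3) ℝ)
    (hP : P.totalDegree ≤ 2) (hQ : Q.totalDegree ≤ 2) (hR : R.totalDegree ≤ 2)
    (hvf : IsVFOnTorus a P Q R) :
    ∃ (α : ℝ) (f : MvPolynomial (Fin 3) ℝ), f.totalDegree ≤ 1 ∧
      P = C (α / 4) * X 0 * X 2 + f * X 1 ∧
      Q = C (α / 4) * X 1 * X 2 - f * X 0 ∧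
      R = C (α / 2) * (- C (a ^ 2) * (X 0 ^ 2 + X 1 ^ 2) + X 2 ^ 2 + C (a ^ 4 - 1)) := by
  obtain ⟨K, hK⟩ := hvf
  simpa only [← pow_mul] using stmt_10_general (c := a ^ 2) hP hQ hR hK
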